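/- Let q > 1 be a real number, λ a real number, and φ ≤ k natural numbers. For j ∈ ℕ define the two-variable functions f_j(X,Y) = Σ_{u=0}^{j} [j;u] γ(λ,u) Y^u X^{j−u} and g_j(X,Y) = Σ_{u=0}^{j} (−1)^u q^{u(u−1)} [j;u] Y^u X^{j−u}. Then for every Y ∈ ℝ and every X ≠ 0, the φ-fold skew-q-derivative with respect to X satisfies (f_k(·,Y))^{(φ)}(X) = β(k,φ) · f_{k−φ}(X,Y) and (g_k(·,Y))^{(φ)}(X) = β(k,φ) · g_{k−φ}(X,Y). -/

import Mathlib

/-- The skew-q-nary Gaussian coefficient `[x;k]` for real `x`. -/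
noncomputable def gaussQ (q x : ℝ) (k : ℕ) : ℝ :=
  ∏ i ∈ Finset.range k, (q ^ (2 * x) - q ^ (2 * (i : ℝ))) / (q ^ (2 * (k : ℝ)) - q ^ (2 * (i : ℝ)))

/-- The skew-q-nary Gamma function `γ(x,k)`. -/
noncomputable def skewGamma (q x : ℝ) (k : ℕ) : ℝ :=
  ∏ i ∈ Finset.range k, (q ^ x - q ^ (2 * (i : ℝ)))

/-- The skew-q-nary Beta function `β(x,k)`. -/
noncomputable def betaQ (q x : ℝ) (k : ℕ) : ℝ :=
  ∏ i ∈ Finset.range k, (q ^ (2 * (x - (i : ℝ))) - 1) / (q ^ 2 - 1)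

/-- The skew-q-derivative operator. -/
noncomputable def qDeriv (q : ℝ) (h : ℝ → ℝ) : ℝ → ℝ :=
  fun X => (h (q ^ 2 * X) - h X) / ((q ^ 2 - 1) * X)

/-!
On monomials the skew-`q`-derivative acts by `Z ^ m ↦ [m] Z ^ (m - 1)`, where
`[m] = 1 + q ^ 2 + ⋯ + q ^ (2 * (m - 1))`. In the `u`-th term of
`∑ u, [n + 1; u] c u Z ^ (n + 1 - u)` the resulting factor `[n + 1 - u]` is traded for one
independent of `u` through the identity `[n + 1; u] [n + 1 - u] = [n + 1] [n; u]`. Hence one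
derivative turns this sum into `[n + 1]` times the same sum for `n`, whatever the coefficients `c`
are, and the factors collected along `φ` derivatives multiply to `β(k, φ)`.
-/

open Finset
open Set (EqOn)

theorem prod_range_mul_sub_pow_mul {R : Type*} [CommRing R] (r a : R) (n : ℕ) :
    (∏ i ∈ range n, (r * a - r ^ i)) * (r * a - r ^ n) =
      r ^ n * (r * a - 1) * ∏ i ∈ range n, (a - r ^ i) :=
  calc
    _ = ∏ i ∈ range (n + 1), (r * a - r ^ i) := (prod_range_succ _ n).symm
    _ = (∏ i ∈ range n, r * (a - r ^ i)) * (r * a - 1) := by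
      simp only [prod_range_succ', pow_succ', mul_sub, pow_zero]
    _ = r ^ n * (r * a - 1) * ∏ i ∈ range n, (a - r ^ i) := by
      rw [prod_mul_distrib, prod_const, card_range, mul_right_comm]

/-- The `q ^ 2`-analogue `1 + q ^ 2 + ⋯ + q ^ (2 * (n - 1))` of the natural number `n`: the
coefficient in the skew-`q`-derivative of `Z ^ n`. -/
def skewInt (q : ℝ) (n : ℕ) : ℝ :=
  ∑ i ∈ range n, (q ^ 2) ^ i

/-- The sum `∑ u ≤ n, [n; u] c u Z ^ (n - u)` as a function of `Z`. The paper's `f_n(·, Y)` and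
`g_n(·, Y)` are the cases `c u = γ(λ, u) Y ^ u` and `c u = (-1) ^ u q ^ (u (u - 1)) Y ^ u`. -/
noncomputable def gaussQSum (q : ℝ) (c : ℕ → ℝ) (n : ℕ) : ℝ → ℝ :=
  fun Z => ∑ u ∈ range (n + 1), gaussQ q (n : ℝ) u * c u * Z ^ (n - u)

section Coefficients

variable {q : ℝ}

theorem rpow_two_mul_natCast (q : ℝ) (n : ℕ) : q ^ (2 * (n : ℝ)) = (q ^ 2) ^ n := by
  rw [← pow_mul]
  exact_mod_cast Real.rpow_natCast q (2 * n)

theorem gaussQ_natCast (q : ℝ) (n k : ℕ) :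
    gaussQ q n k =
      (∏ i ∈ range k, ((q ^ 2) ^ n - (q ^ 2) ^ i)) /
        ∏ i ∈ range k, ((q ^ 2) ^ k - (q ^ 2) ^ i) := by
  simp only [gaussQ, rpow_two_mul_natCast, prod_div_distrib]

theorem gaussQ_succ_mul_sub (q : ℝ) (n k : ℕ) :
    gaussQ q (n + 1 : ℕ) k * ((q ^ 2) ^ (n + 1) - (q ^ 2) ^ k) =
      (q ^ 2) ^ k * ((q ^ 2) ^ (n + 1) - 1) * gaussQ q n k := by
  rw [gaussQ_natCast, gaussQ_natCast, pow_succ' _ n, div_mul_eq_mul_div,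
    prod_range_mul_sub_pow_mul, mul_div_assoc]

theorem gaussQ_succ_mul_skewInt (hq₀ : q ≠ 0) (hq₁ : q ^ 2 ≠ 1) {n k : ℕ} (hk : k ≤ n + 1) :
    gaussQ q (n + 1 : ℕ) k * skewInt q (n + 1 - k) = skewInt q (n + 1) * gaussQ q n k := by
  have hpow : (q ^ 2) ^ (n + 1) = (q ^ 2) ^ k * (q ^ 2) ^ (n + 1 - k) := by
    rw [← pow_add, Nat.add_sub_cancel' hk]
  have hscale : (q ^ 2) ^ k * (q ^ 2 - 1) ≠ 0 :=
    mul_ne_zero (pow_ne_zero k (pow_ne_zero 2 hq₀)) (sub_ne_zero.mpr hq₁)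
  have hn : skewInt q (n + 1) * (q ^ 2 - 1) = (q ^ 2) ^ (n + 1) - 1 := geom_sum_mul _ _
  have hnk : skewInt q (n + 1 - k) * (q ^ 2 - 1) = (q ^ 2) ^ (n + 1 - k) - 1 := geom_sum_mul _ _
  apply mul_left_cancel₀ hscale
  linear_combination gaussQ_succ_mul_sub q n k + gaussQ q (n + 1 : ℕ) k * (q ^ 2) ^ k * hnk -
    (q ^ 2) ^ k * gaussQ q n k * hn - gaussQ q (n + 1 : ℕ) k * hpow

theorem betaQ_natCast_add_succ (hq₁ : q ^ 2 ≠ 1) (n φ : ℕ) :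
    betaQ q (n + φ : ℕ) (φ + 1) = betaQ q (n + φ : ℕ) φ * skewInt q n := by
  rw [betaQ, prod_range_succ, ← betaQ, skewInt, geom_sum_eq hq₁, Nat.cast_add, add_sub_cancel_right,
    rpow_two_mul_natCast]

end Coefficients

section Derivative

variable {q X : ℝ}

theorem qDeriv_const_mul (q a : ℝ) (h : ℝ → ℝ) (X : ℝ) :
    qDeriv q (fun Z => a * h Z) X = a * qDeriv q h X := by
  simp only [qDeriv, ← mul_sub, mul_div_assoc]

theorem qDeriv_sum {ι : Type*} (q : ℝ) (s : Finset ι) (h : ι → ℝ → ℝ) (X : ℝ) :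
    qDeriv q (fun Z => ∑ i ∈ s, h i Z) X = ∑ i ∈ s, qDeriv q (h i) X := by
  simp only [qDeriv, ← sum_sub_distrib, sum_div]

theorem qDeriv_pow (hq₁ : q ^ 2 ≠ 1) (hX : X ≠ 0) (n : ℕ) :
    qDeriv q (fun Z => Z ^ n) X = skewInt q n * X ^ (n - 1) := by
  cases n with
  | zero => simp [qDeriv, skewInt]
  | succ m =>
    rw [qDeriv, skewInt, geom_sum_eq hq₁, mul_pow, ← sub_one_mul, mul_div_mul_comm,
      Nat.add_sub_cancel, pow_succ X, mul_div_cancel_right₀ _ hX]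

/- Since `qDeriv` takes the value `0` at the origin by division by zero, identities between
derivatives only hold, and only need to be carried, on `{0}ᶜ`. -/
theorem eqOn_qDeriv (hq₀ : q ≠ 0) {h₁ h₂ : ℝ → ℝ} (h : EqOn h₁ h₂ {0}ᶜ) :
    EqOn (qDeriv q h₁) (qDeriv q h₂) {0}ᶜ := by
  intro X hX
  have hqX : q ^ 2 * X ∈ ({0}ᶜ : Set ℝ) := mul_ne_zero (pow_ne_zero 2 hq₀) hX
  rw [qDeriv, qDeriv, h hX, h hqX]

theorem qDeriv_gaussQSum_succ (hq₀ : q ≠ 0) (hq₁ : q ^ 2 ≠ 1) (c : ℕ → ℝ) (n : ℕ) (hX : X ≠ 0) :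
    qDeriv q (gaussQSum q c (n + 1)) X = skewInt q (n + 1) * gaussQSum q c n X := by
  have hterm : ∀ u ≤ n + 1,
      gaussQ q (n + 1 : ℕ) u * c u * (skewInt q (n + 1 - u) * X ^ (n + 1 - u - 1)) =
        skewInt q (n + 1) * (gaussQ q n u * c u * X ^ (n - u)) := by
    intro u hu
    rw [Nat.sub_right_comm, Nat.add_sub_cancel]
    linear_combination c u * X ^ (n - u) * gaussQ_succ_mul_skewInt hq₀ hq₁ hu
  have hlast : skewInt q (n + 1 - (n + 1)) = 0 := by simp [skewInt]
  calc
    _ = ∑ u ∈ range (n + 1 + 1),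
          gaussQ q (n + 1 : ℕ) u * c u * (skewInt q (n + 1 - u) * X ^ (n + 1 - u - 1)) := by
      unfold gaussQSum
      simp only [qDeriv_sum, qDeriv_const_mul, qDeriv_pow hq₁ hX]
    _ = ∑ u ∈ range (n + 1),
          gaussQ q (n + 1 : ℕ) u * c u * (skewInt q (n + 1 - u) * X ^ (n + 1 - u - 1)) := by
      rw [sum_range_succ, hlast, zero_mul, mul_zero, add_zero]
    _ = skewInt q (n + 1) * gaussQSum q c n X := by
      rw [gaussQSum, mul_sum]
      exact sum_congr rfl fun u hu => hterm u (mem_range.mp hu).le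

theorem eqOn_iterate_qDeriv_gaussQSum_add (hq₀ : q ≠ 0) (hq₁ : q ^ 2 ≠ 1) (c : ℕ → ℝ) (n φ : ℕ) :
    EqOn ((qDeriv q)^[φ] (gaussQSum q c (n + φ)))
      (fun X => betaQ q (n + φ : ℕ) φ * gaussQSum q c n X) {0}ᶜ := by
  induction φ generalizing n with
  | zero => simp [betaQ, EqOn]
  | succ φ ih =>
    intro X hX
    have hindex : n + (φ + 1) = n + 1 + φ := by omega
    rw [hindex, Function.iterate_succ_apply']
    calc
      _ = qDeriv q (fun Z => betaQ q (n + 1 + φ : ℕ) φ * gaussQSum q c (n + 1) Z) X :=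
        eqOn_qDeriv hq₀ (ih (n + 1)) hX
      _ = betaQ q (n + 1 + φ : ℕ) φ * (skewInt q (n + 1) * gaussQSum q c n X) := by
        rw [qDeriv_const_mul, qDeriv_gaussQSum_succ hq₀ hq₁ c n hX]
      _ = betaQ q (n + 1 + φ : ℕ) (φ + 1) * gaussQSum q c n X := by
        rw [betaQ_natCast_add_succ hq₁, mul_assoc]

theorem stmt5_general (hq₀ : q ≠ 0) (hq₁ : q ^ 2 ≠ 1) (c : ℕ → ℝ) {φ k : ℕ} (hφ : φ ≤ k)
    (hX : X ≠ 0) :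
    (qDeriv q)^[φ] (gaussQSum q c k) X = betaQ q k φ * gaussQSum q c (k - φ) X := by
  simpa only [Nat.sub_add_cancel hφ] using
    eqOn_iterate_qDeriv_gaussQSum_add hq₀ hq₁ c (k - φ) φ hX

end Derivative

theorem stmt5 (q : ℝ) (hq : 1 < q) (lam : ℝ) (φ k : ℕ) (hφ : φ ≤ k) (Y X : ℝ) (hX : X ≠ 0) :
    ((qDeriv q)^[φ] (fun Z => ∑ u ∈ Finset.range (k + 1),
          gaussQ q (k : ℝ) u * skewGamma q lam u * Y ^ u * Z ^ (k - u))) X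
        = betaQ q (k : ℝ) φ * ∑ u ∈ Finset.range ((k - φ) + 1),
            gaussQ q ((k - φ : ℕ) : ℝ) u * skewGamma q lam u * Y ^ u * X ^ ((k - φ) - u)
    ∧ ((qDeriv q)^[φ] (fun Z => ∑ u ∈ Finset.range (k + 1),
          (-1 : ℝ) ^ u * q ^ (u * (u - 1)) * gaussQ q (k : ℝ) u * Y ^ u * Z ^ (k - u))) X
        = betaQ q (k : ℝ) φ * ∑ u ∈ Finset.range ((k - φ) + 1),
            (-1 : ℝ) ^ u * q ^ (u * (u - 1)) * gaussQ q ((k - φ : ℕ) : ℝ) u * Y ^ u *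
              X ^ ((k - φ) - u) := by
  have h (c : ℕ → ℝ) := stmt5_general (by positivity) (one_lt_pow₀ hq two_ne_zero).ne' c hφ hX
  unfold gaussQSum at h
  constructor
  · simpa only [mul_assoc] using h fun u => skewGamma q lam u * Y ^ u
  · simpa only [mul_assoc, mul_left_comm] using h fun u => (-1) ^ u * q ^ (u * (u - 1)) * Y ^ u
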